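/- (Vitali's theorem.) Let Ω ⊆ ℂ be open and connected, and let (f_n)_{n∈ℕ} be a sequence of holomorphic functions on Ω which is locally bounded (every point of Ω has a neighbourhood on which sup_n sup |f_n| < ∞). If the set S := {z ∈ Ω : lim_{n→∞} f_n(z) exists} has an accumulation point in Ω, then (f_n)_{n∈ℕ} converges locally uniformly on Ω (and the limit function is holomorphic on Ω). -/

import Mathlib

open Filter

/-!
A locally bounded family of holomorphic functions is equicontinuous by the Schwarz lemma, so its
pointwise limits are automatically locally uniform, hence holomorphic. If the values lie in a proper
space, pointwise limits exist along every ultrafilter, and the identity theorem shows that such a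
family tending to `0` on a set with an accumulation point in `Ω` tends to `0` on all of `Ω`.
Composing with norming functionals, chosen separately for each index, extends this to an arbitrary
normed space. Applied to the differences `f m - f n`, it says that `(f n z)` is Cauchy, hence
convergent, for every `z ∈ Ω`.
-/

open Set Topology

variable {ι : Type*}

section Topology

variable {X α : Type*} [TopologicalSpace X] [UniformSpace α]

theorem tendstoLocallyUniformlyOn_of_equicontinuousOn {F : ι → X → α} {g : X → α} {s : Set X}
    {l : Filter ι} [l.NeBot] (hF : EquicontinuousOn F s)
    (hg : ∀ x ∈ s, Tendsto (F · x) l (𝓝 (g x))) : TendstoLocallyUniformlyOn F g l s := by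
  intro U hU x hx
  obtain ⟨V, hV, -, hVU⟩ := comp_comp_symm_mem_uniformity_sets hU
  have hg_cont : ContinuousWithinAt g s x :=
    Tendsto.continuousWithinAt_of_equicontinuousWithinAt hg (hg x hx) (hF x hx)
  have hg_near : ∀ᶠ y in 𝓝[s] x, (g y, g x) ∈ V := hg_cont (mem_nhds_right _ hV)
  have hF_lim : ∀ᶠ i in l, (g x, F i x) ∈ V := hg x hx (mem_nhds_left _ hV)
  refine ⟨_, hg_near.and (hF x hx V hV), ?_⟩
  filter_upwards [hF_lim] with i hi y hy
  exact hVU ⟨F i x, ⟨g x, hy.1, hi⟩, hy.2 i⟩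

end Topology

/-- A family `F` of functions is *locally bounded* on `s` if each point of `s` has a neighbourhood
on which all members of `F` are bounded by a common constant. Neighbourhoods are taken in the
ambient space, not in `s`. -/
def LocallyBoundedFamilyOn {X E : Type*} [TopologicalSpace X] [Norm E]
    (F : ι → X → E) (s : Set X) : Prop :=
  ∀ x ∈ s, ∃ U ∈ 𝓝 x, ∃ C : ℝ, ∀ i, ∀ y ∈ U, ‖F i y‖ ≤ C

namespace LocallyBoundedFamilyOn

theorem comp {X E κ : Type*} [TopologicalSpace X] [Norm E] {F : ι → X → E} {s : Set X}
    (hF : LocallyBoundedFamilyOn F s) (u : κ → ι) : LocallyBoundedFamilyOn (F ∘ u) s := by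
  intro x hx
  obtain ⟨U, hU, C, hC⟩ := hF x hx
  exact ⟨U, hU, C, fun k => hC (u k)⟩

section Basic

variable {X E : Type*} [TopologicalSpace X] [SeminormedAddCommGroup E] {F G : ι → X → E} {s : Set X}

theorem sub (hF : LocallyBoundedFamilyOn F s) (hG : LocallyBoundedFamilyOn G s) :
    LocallyBoundedFamilyOn (F - G) s := by
  intro x hx
  obtain ⟨U, hU, C, hC⟩ := hF x hx
  obtain ⟨V, hV, D, hD⟩ := hG x hx
  exact ⟨U ∩ V, inter_mem hU hV, C + D, fun i y hy =>
    norm_sub_le_of_le (hC i y hy.1) (hD i y hy.2)⟩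

theorem clm_apply {𝕜 E' : Type*} [NontriviallyNormedField 𝕜] [NormedSpace 𝕜 E]
    [SeminormedAddCommGroup E'] [NormedSpace 𝕜 E'] (hF : LocallyBoundedFamilyOn F s)
    {φ : ι → E →L[𝕜] E'} {M : ℝ} (hφ : ∀ i, ‖φ i‖ ≤ M) :
    LocallyBoundedFamilyOn (fun i x => φ i (F i x)) s := by
  intro x hx
  obtain ⟨U, hU, C, hC⟩ := hF x hx
  exact ⟨U, hU, M * C, fun i y hy => (φ i).le_of_opNorm_le_of_le (hφ i) (hC i y hy)⟩

theorem exists_tendsto_ultrafilter [ProperSpace E] (hF : LocallyBoundedFamilyOn F s)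
    (u : Ultrafilter ι) : ∃ g : X → E, ∀ x ∈ s, Tendsto (F · x) u (𝓝 (g x)) := by
  have exists_limit : ∀ x ∈ s, ∃ y, Tendsto (F · x) u (𝓝 y) := by
    intro x hx
    obtain ⟨U, hU, C, hC⟩ := hF x hx
    have values_mem : ∀ i, F i x ∈ Metric.closedBall 0 C := fun i =>
      mem_closedBall_zero_iff.2 (hC i x (mem_of_mem_nhds hU))
    obtain ⟨y, -, hy⟩ := (isCompact_closedBall (0 : E) C).ultrafilter_le_nhds
      (u.map (F · x)) (tendsto_principal.2 (.of_forall values_mem))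
    exact ⟨y, hy⟩
  choose! g hg using exists_limit
  exact ⟨g, hg⟩

end Basic

section Holomorphic

variable {E : Type*} [NormedAddCommGroup E] [NormedSpace ℂ E] {F : ι → ℂ → E} {Ω : Set ℂ} {z₀ : ℂ}

theorem equicontinuousOn (hb : LocallyBoundedFamilyOn F Ω) (hΩ : IsOpen Ω)
    (hF : ∀ i, DifferentiableOn ℂ (F i) Ω) : EquicontinuousOn F Ω := by
  intro z hz
  obtain ⟨U, hU, C, hC⟩ := hb z hz
  obtain ⟨r, hr, hball⟩ := Metric.mem_nhds_iff.1 (inter_mem hU (hΩ.mem_nhds hz))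
  have mapsTo_closedBall (i : ι) :
      MapsTo (F i) (Metric.ball z r) (Metric.closedBall (F i z) (C + C)) := fun w hw =>
    mem_closedBall_iff_norm.2 <|
      norm_sub_le_of_le (hC i w (hball hw).1) (hC i z (mem_of_mem_nhds hU))
  have schwarz : ∀ᶠ w in 𝓝 z, ∀ i, dist (F i z) (F i w) ≤ (C + C) / r * dist w z := by
    filter_upwards [Metric.ball_mem_nhds z hr] with w hw i
    rw [dist_comm]
    exact Complex.dist_le_div_mul_dist_of_mapsTo_ball
      ((hF i).mono (hball.trans inter_subset_right)) (mapsTo_closedBall i) hw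
  have modulus_tendsto : Tendsto (fun w => (C + C) / r * dist w z) (𝓝 z) (𝓝 0) :=
    Continuous.tendsto' (by fun_prop) z 0 (by simp only [dist_self, mul_zero])
  exact (Metric.equicontinuousAt_of_continuity_modulus _ modulus_tendsto F
    schwarz).equicontinuousWithinAt Ω

theorem tendstoLocallyUniformlyOn {g : ℂ → E} {l : Filter ι} [l.NeBot]
    (hb : LocallyBoundedFamilyOn F Ω) (hΩ : IsOpen Ω) (hF : ∀ i, DifferentiableOn ℂ (F i) Ω)
    (hg : ∀ z ∈ Ω, Tendsto (F · z) l (𝓝 (g z))) : TendstoLocallyUniformlyOn F g l Ω :=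
  tendstoLocallyUniformlyOn_of_equicontinuousOn (hb.equicontinuousOn hΩ hF) hg

theorem tendsto_zero_of_properSpace [ProperSpace E] {l : Filter ι}
    (hb : LocallyBoundedFamilyOn F Ω) (hΩ : IsOpen Ω) (hΩc : IsPreconnected Ω)
    (hF : ∀ i, DifferentiableOn ℂ (F i) Ω) (hz₀ : z₀ ∈ Ω)
    (hfreq : ∃ᶠ z in 𝓝[≠] z₀, Tendsto (F · z) l (𝓝 0)) {z : ℂ} (hz : z ∈ Ω) :
    Tendsto (F · z) l (𝓝 0) := by
  rw [tendsto_iff_ultrafilter]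
  intro u hu
  obtain ⟨g, hg⟩ := hb.exists_tendsto_ultrafilter u
  have hg_analytic : AnalyticOnNhd ℂ g Ω :=
    ((hb.tendstoLocallyUniformlyOn hΩ hF hg).differentiableOn (.of_forall hF) hΩ).analyticOnNhd hΩ
  have hg_freq : ∃ᶠ w in 𝓝[≠] z₀, g w = 0 := by
    have w_mem : ∀ᶠ w in 𝓝[≠] z₀, w ∈ Ω := mem_nhdsWithin_of_mem_nhds (hΩ.mem_nhds hz₀)
    exact (hfreq.and_eventually w_mem).mono fun w hw =>
      tendsto_nhds_unique (hg w hw.2) (hw.1.mono_left hu)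
  have hg_zero : g z = 0 :=
    hg_analytic.eqOn_zero_of_preconnected_of_frequently_eq_zero hΩc hz₀ hg_freq hz
  exact hg_zero ▸ hg z hz

theorem tendsto_zero {l : Filter ι}
    (hb : LocallyBoundedFamilyOn F Ω) (hΩ : IsOpen Ω) (hΩc : IsPreconnected Ω)
    (hF : ∀ i, DifferentiableOn ℂ (F i) Ω) (hz₀ : z₀ ∈ Ω)
    (hfreq : ∃ᶠ z in 𝓝[≠] z₀, Tendsto (F · z) l (𝓝 0)) {z : ℂ} (hz : z ∈ Ω) :
    Tendsto (F · z) l (𝓝 0) := by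
  choose φ hφ_norm hφ_apply using fun i => exists_dual_vector'' ℂ (F i z)
  have hφ_freq : ∃ᶠ w in 𝓝[≠] z₀, Tendsto (fun i => φ i (F i w)) l (𝓝 0) :=
    hfreq.mono fun w hw => squeeze_zero_norm
      (fun i => (φ i).le_of_opNorm_le_of_le (hφ_norm i) le_rfl)
      (by simpa only [one_mul, norm_zero] using hw.norm)
  have hφ_tendsto : Tendsto (fun i => φ i (F i z)) l (𝓝 0) :=
    (hb.clm_apply hφ_norm).tendsto_zero_of_properSpace hΩ hΩc
      (fun i => (φ i).differentiable.comp_differentiableOn (hF i)) hz₀ hφ_freq hz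
  rw [tendsto_zero_iff_norm_tendsto_zero] at hφ_tendsto ⊢
  simpa only [hφ_apply, RCLike.norm_ofReal, abs_norm] using hφ_tendsto

theorem cauchy_map {l : Filter ι} [l.NeBot]
    (hb : LocallyBoundedFamilyOn F Ω) (hΩ : IsOpen Ω) (hΩc : IsPreconnected Ω)
    (hF : ∀ i, DifferentiableOn ℂ (F i) Ω) (hz₀ : z₀ ∈ Ω)
    (hfreq : ∃ᶠ z in 𝓝[≠] z₀, Cauchy (map (F · z) l)) {z : ℂ} (hz : z ∈ Ω) :
    Cauchy (map (F · z) l) := by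
  have cauchy_iff (w : ℂ) : Cauchy (map (F · w) l) ↔
      Tendsto (fun p : ι × ι => F p.2 w - F p.1 w) (l ×ˢ l) (𝓝 0) := by
    rw [cauchy_map_iff', uniformity_eq_comap_nhds_zero, tendsto_comap_iff, Function.comp_def]
  simp only [cauchy_iff] at hfreq ⊢
  exact ((hb.comp Prod.snd).sub (hb.comp Prod.fst)).tendsto_zero hΩ hΩc
    (fun p => (hF p.2).sub (hF p.1)) hz₀ hfreq hz

end Holomorphic

end LocallyBoundedFamilyOn

theorem stmt9_general {E : Type*} [NormedAddCommGroup E] [NormedSpace ℂ E] [CompleteSpace E]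
    {l : Filter ι} [l.NeBot] {f : ι → ℂ → E} {Ω : Set ℂ} (hΩ : IsOpen Ω) (hΩc : IsPreconnected Ω)
    (hf : ∀ i, DifferentiableOn ℂ (f i) Ω) (hb : LocallyBoundedFamilyOn f Ω) {z₀ : ℂ}
    (hz₀ : z₀ ∈ Ω) (hacc : AccPt z₀ (𝓟 {z | z ∈ Ω ∧ ∃ y, Tendsto (f · z) l (𝓝 y)})) :
    ∃ g : ℂ → E, DifferentiableOn ℂ g Ω ∧ TendstoLocallyUniformlyOn f g l Ω := by
  have cauchy_freq : ∃ᶠ z in 𝓝[≠] z₀, Cauchy (map (f · z) l) :=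
    (accPt_iff_frequently_nhdsNE.1 hacc).mono fun _ ⟨_, _, hy⟩ => hy.cauchy_map
  have exists_limit : ∀ z ∈ Ω, ∃ y, Tendsto (f · z) l (𝓝 y) := fun z hz =>
    cauchy_iff_exists_le_nhds.1 (hb.cauchy_map hΩ hΩc hf hz₀ cauchy_freq hz)
  choose! g hg using exists_limit
  have hlim : TendstoLocallyUniformlyOn f g l Ω := hb.tendstoLocallyUniformlyOn hΩ hf hg
  exact ⟨g, hlim.differentiableOn (.of_forall hf) hΩ, hlim⟩

/-- **Vitali's theorem.** Let `Ω ⊆ ℂ` be open and connected and `(fₙ)` a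
locally bounded sequence of holomorphic functions on `Ω`.  If the set of points where
`(fₙ(z))` converges has an accumulation point in `Ω`, then `(fₙ)` converges locally
uniformly on `Ω` to a holomorphic limit. -/
theorem stmt9
    (Ω : Set ℂ) (hΩopen : IsOpen Ω) (hΩconn : IsConnected Ω)
    (f : ℕ → ℂ → ℂ)
    (hf : ∀ n, DifferentiableOn ℂ (f n) Ω)
    -- local boundedness: every point of Ω has a neighbourhood on which sup_n sup |f_n| < ∞
    (hlocbdd : ∀ z ∈ Ω, ∃ U ∈ nhds z, ∃ C : ℝ, ∀ n, ∀ w ∈ U, ‖f n w‖ ≤ C)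
    (S : Set ℂ)
    (hS : S = {z | z ∈ Ω ∧ ∃ l : ℂ, Tendsto (fun n => f n z) atTop (nhds l)})
    -- `S` has an accumulation point in `Ω`
    (hacc : ∃ z₀ ∈ Ω, AccPt z₀ (Filter.principal S)) :
    ∃ g : ℂ → ℂ, DifferentiableOn ℂ g Ω ∧ TendstoLocallyUniformlyOn f g atTop Ω := by
  subst hS
  obtain ⟨z₀, hz₀, hacc⟩ := hacc
  exact stmt9_general hΩopen hΩconn.isPreconnected hf hlocbdd hz₀ hacc
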